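/- arXiv:1412.5090 — 3 statements merged into one kernel-verified Lean document; each statement's English description precedes it below -/
import Mathlib

section
/- Let c ∈ (0,1) ∩ ℚ and let M = (W,R,V,P) be an epistemic probability model. Define N^c(w) := {X ⊆ [w] : P_w(X) > c} for each w ∈ W. Then (W,R,V,N^c) is an epistemic neighborhood model; that is, N^c satisfies (kbc), (kbf), (n), (a), and (kbm). -/
open Classical

/-- An epistemic probability model: finite nonempty world set, S5 (equivalence)
accessibility relation, valuation, and a finitely additive probability measure
with full support. -/
structure EPM (W A : Type) where
  finite : Finite W
  nonempty : Nonempty W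
  R : W → W → Prop
  equiv : Equivalence R
  V : W → Set A
  P : Set W → ℝ
  nonneg : ∀ X : Set W, 0 ≤ P X
  le_one : ∀ X : Set W, P X ≤ 1
  norm : P Set.univ = 1
  add : ∀ X Y : Set W, X ∩ Y = ∅ → P (X ∪ Y) = P X + P Y
  full : ∀ w : W, 0 < P {w}

/-- The equivalence class `[w]` of a world. -/
def EPM.cl {W A : Type} (M : EPM W A) (w : W) : Set W := {v | M.R w v}

/-- `P_w(X) := P(X ∩ [w]) / P([w])`. -/
noncomputable def EPM.Pw {W A : Type} (M : EPM W A) (w : W) (X : Set W) : ℝ :=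
  M.P (X ∩ M.cl w) / M.P (M.cl w)

/-- An epistemic neighborhood model. -/
structure ENM (W A : Type) where
  finite : Finite W
  nonempty : Nonempty W
  R : W → W → Prop
  equiv : Equivalence R
  V : W → Set A
  N : W → Set (Set W)
  kbc : ∀ w : W, ∀ X ∈ N w, X ⊆ {v | R w v}
  kbf : ∀ w : W, ∅ ∉ N w
  contains_class : ∀ w : W, {v | R w v} ∈ N w
  agreeN : ∀ w v : W, R w v → N v = N w
  kbm : ∀ w : W, ∀ X ∈ N w, ∀ Y : Set W, X ⊆ Y → Y ⊆ {v | R w v} → Y ∈ N w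

/-- The equivalence class `[w]` of a world. -/
def ENM.cl {W A : Type} (M : ENM W A) (w : W) : Set W := {v | M.R w v}

namespace EPM

variable {W A : Type} (M : EPM W A) {c : ℝ} {v w : W} {X Y : Set W}

theorem P_empty : M.P ∅ = 0 := by
  have h := M.add ∅ ∅ (Set.inter_self ∅)
  rwa [Set.union_self, left_eq_add] at h

theorem P_mono : Monotone M.P := fun X Y hXY ↦ calc
  M.P X ≤ M.P X + M.P (Y \ X) := le_add_of_nonneg_right (M.nonneg _)
  _ = M.P (X ∪ Y \ X) := (M.add X (Y \ X) (Set.inter_sdiff_self X Y)).symm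
  _ = M.P Y := by rw [Set.union_sdiff_cancel hXY]

theorem P_pos_of_nonempty (hX : X.Nonempty) : 0 < M.P X := by
  obtain ⟨w, hw⟩ := hX
  exact (M.full w).trans_le (M.P_mono (Set.singleton_subset_iff.mpr hw))

theorem cl_nonempty (w : W) : (M.cl w).Nonempty := ⟨w, M.equiv.refl w⟩

variable {M} in
theorem cl_eq_of_R (h : M.R w v) : M.cl v = M.cl w :=
  Set.ext fun _ ↦ ⟨M.equiv.trans h, M.equiv.trans (M.equiv.symm h)⟩

theorem Pw_empty (w : W) : M.Pw w ∅ = 0 := by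
  rw [Pw, Set.empty_inter, P_empty, zero_div]

theorem Pw_cl (w : W) : M.Pw w (M.cl w) = 1 := by
  rw [Pw, Set.inter_self, div_self (M.P_pos_of_nonempty (M.cl_nonempty w)).ne']

theorem Pw_mono (w : W) : Monotone (M.Pw w) := fun _ _ hXY ↦
  div_le_div_of_nonneg_right (M.P_mono (Set.inter_subset_inter_left _ hXY)) (M.nonneg _)

variable {M} in
theorem Pw_eq_of_R (h : M.R w v) : M.Pw v = M.Pw w := by
  funext X
  rw [Pw, Pw, cl_eq_of_R h]

/-- The neighborhood function `N^c` of the paper, for a real threshold `c`: the propositions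
`X ⊆ [w]` to which the agent at `w` assigns probability greater than `c`. -/
def thresholdNbhd (c : ℝ) (w : W) : Set (Set W) := {X | X ⊆ M.cl w ∧ c < M.Pw w X}

theorem empty_notMem_thresholdNbhd (hc : 0 ≤ c) (w : W) : ∅ ∉ M.thresholdNbhd c w :=
  fun h ↦ (h.2.trans_eq (M.Pw_empty w)).not_ge hc

theorem cl_mem_thresholdNbhd (hc : c < 1) (w : W) : M.cl w ∈ M.thresholdNbhd c w :=
  ⟨subset_rfl, hc.trans_eq (M.Pw_cl w).symm⟩

variable {M} in
theorem thresholdNbhd_eq_of_R (h : M.R w v) : M.thresholdNbhd c v = M.thresholdNbhd c w := by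
  rw [thresholdNbhd, thresholdNbhd, cl_eq_of_R h, Pw_eq_of_R h]

variable {M} in
theorem mem_thresholdNbhd_of_subset (hX : X ∈ M.thresholdNbhd c w) (hXY : X ⊆ Y)
    (hY : Y ⊆ M.cl w) : Y ∈ M.thresholdNbhd c w :=
  ⟨hY, hX.2.trans_le (M.Pw_mono w hXY)⟩

/-- The epistemic neighborhood model `(W, R, V, N^c)` in which an agent believes exactly the
propositions of probability greater than `c`. -/
def toENM (c : ℝ) (hc0 : 0 ≤ c) (hc1 : c < 1) : ENM W A where
  finite := M.finite
  nonempty := M.nonempty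
  R := M.R
  equiv := M.equiv
  V := M.V
  N := M.thresholdNbhd c
  kbc _ _ hX := hX.1
  kbf := M.empty_notMem_thresholdNbhd hc0
  contains_class := M.cl_mem_thresholdNbhd hc1
  agreeN _ _ := thresholdNbhd_eq_of_R
  kbm _ _ hX _ := mem_thresholdNbhd_of_subset hX

end EPM

theorem derived_neighborhood_model_general {W A : Type} (c : ℝ) (hc0 : 0 ≤ c) (hc1 : c < 1)
    (M : EPM W A) :
    ∃ M' : ENM W A, M'.R = M.R ∧ M'.V = M.V ∧
      ∀ w : W, M'.N w = {X : Set W | X ⊆ M.cl w ∧ c < M.Pw w X} :=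
  ⟨M.toENM c hc0 hc1, rfl, rfl, fun _ ↦ rfl⟩

/-- For `c ∈ (0,1) ∩ ℚ`, the neighborhood function `N^c(w) = {X ⊆ [w] : P_w(X) > c}`
derived from an epistemic probability model yields an epistemic neighborhood model. -/
theorem derived_neighborhood_model {W A : Type} (c : ℚ) (hc0 : 0 < c) (hc1 : c < 1)
    (M : EPM W A) :
    ∃ M' : ENM W A, M'.R = M.R ∧ M'.V = M.V ∧
      ∀ w : W, M'.N w = {X : Set W | X ⊆ M.cl w ∧ (c : ℝ) < M.Pw w X} :=
  derived_neighborhood_model_general c (mod_cast hc0.le) (mod_cast hc1) M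
end

section
/- The calculus KB is incomplete for all thresholds with respect to epistemic probability models: there exists a formula φ of L_KB such that for every c ∈ (0,1) ∩ ℚ, φ is true at every world of every epistemic probability model under the probability semantics with threshold c, and yet KB ⊬ φ. -/
open Classical

/-- The language `L_KB`: `φ ::= ⊤ | p | ¬φ | φ∧φ | Kφ | Bφ`. -/
inductive Form (A : Type) : Type where
  | top : Form A
  | atom : A → Form A
  | neg : Form A → Form A
  | and : Form A → Form A → Form A
  | K : Form A → Form A
  | B : Form A → Form A

namespace Form

/-- Material implication abbreviation. -/
def imp {A : Type} (φ ψ : Form A) : Form A := Form.neg (Form.and φ (Form.neg ψ))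

/-- Disjunction abbreviation. -/
def or {A : Type} (φ ψ : Form A) : Form A := Form.neg (Form.and (Form.neg φ) (Form.neg ψ))

/-- Falsehood `⊥ := ¬⊤`. -/
def bot {A : Type} : Form A := Form.neg Form.top

/-- Biconditional abbreviation. -/
def iff {A : Type} (φ ψ : Form A) : Form A := Form.and (Form.imp φ ψ) (Form.imp ψ φ)

end Form

/-- Truth set of a formula in an epistemic probability model, for threshold `c`:
`Kφ` holds at `w` iff `P_w(⟦φ⟧) = 1`, and `Bφ` holds at `w` iff `P_w(⟦φ⟧) > c`. -/
noncomputable def psem {W A : Type} (c : ℝ) (M : EPM W A) : Form A → Set W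
  | Form.top => Set.univ
  | Form.atom p => {w | p ∈ M.V w}
  | Form.neg φ => (psem c M φ)ᶜ
  | Form.and φ ψ => psem c M φ ∩ psem c M ψ
  | Form.K φ => {w | M.Pw w (psem c M φ) = 1}
  | Form.B φ => {w | c < M.Pw w (psem c M φ)}

/-- Boolean evaluation of a formula under a valuation of "atomic" formulas
(propositional letters and formulas of the form `Kφ` or `Bφ`). -/
def evalb {A : Type} (v : Form A → Bool) : Form A → Bool
  | Form.top => true
  | Form.atom p => v (Form.atom p)
  | Form.neg φ => !(evalb v φ)
  | Form.and φ ψ => evalb v φ && evalb v ψ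
  | Form.K φ => v (Form.K φ)
  | Form.B φ => v (Form.B φ)

/-- `φ` is a propositional tautology (treating `Kψ` and `Bψ` as atoms). -/
def Taut {A : Type} (φ : Form A) : Prop := ∀ v : Form A → Bool, evalb v φ = true

/-- The Hilbert calculus `KB`. -/
inductive KB {A : Type} : Form A → Prop where
  | taut {φ : Form A} : Taut φ → KB φ
  | kdist (φ ψ : Form A) :
      KB (Form.imp (Form.K (Form.imp φ ψ)) (Form.imp (Form.K φ) (Form.K ψ)))
  | kt (φ : Form A) : KB (Form.imp (Form.K φ) φ)
  | k4 (φ : Form A) : KB (Form.imp (Form.K φ) (Form.K (Form.K φ)))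
  | k5 (φ : Form A) : KB (Form.imp (Form.neg (Form.K φ)) (Form.K (Form.neg (Form.K φ))))
  | bf : KB (Form.neg (Form.B (Form.bot)))
  | bn : KB (Form.B Form.top)
  | ap (φ : Form A) : KB (Form.imp (Form.B φ) (Form.K (Form.B φ)))
  | an (φ : Form A) : KB (Form.imp (Form.neg (Form.B φ)) (Form.K (Form.neg (Form.B φ))))
  | kbm (φ ψ : Form A) :
      KB (Form.imp (Form.K (Form.imp φ ψ)) (Form.imp (Form.B φ) (Form.B ψ)))
  | mp {φ ψ : Form A} : KB (Form.imp φ ψ) → KB φ → KB ψ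
  | nec {φ : Form A} : KB φ → KB (Form.K φ)

/-!
Two complementary events cannot both have probability above `c` unless `c < 1 / 2`, and then every
event or its complement does; so if some proposition and its negation are both believed, every
proposition is believed or its negation is. Nothing in `KB` links belief in one proposition to
belief in another in this way: `KB` is sound for neighbourhood models, where the family of believed
propositions need only be closed under supersets, contain the sure event and omit the empty one.
Declaring the supersets of `⟦p⟧` and of its complement to be believed yields beliefs in both `p`
and `¬p`, but none in a proposition `q` independent of `p` nor in its negation.
-/

namespace EPM

variable {W A : Type} (M : EPM W A)

theorem P_mono_s16 {X Y : Set W} (h : X ⊆ Y) : M.P X ≤ M.P Y := by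
  have hadd := M.add X (Y \ X) (Set.inter_sdiff_self X Y)
  rw [Set.union_sdiff_cancel h] at hadd
  linarith [M.nonneg (Y \ X)]

theorem P_pos {X : Set W} (hX : X.Nonempty) : 0 < M.P X := by
  obtain ⟨w, hw⟩ := hX
  exact (M.full w).trans_le (M.P_mono_s16 (Set.singleton_subset_iff.2 hw))

theorem P_cl_pos (w : W) : 0 < M.P (M.cl w) :=
  M.P_pos ⟨w, M.equiv.refl w⟩

theorem Pw_add_Pw_compl (w : W) (X : Set W) : M.Pw w X + M.Pw w Xᶜ = 1 := by
  have hadd : M.P (M.cl w) = M.P (X ∩ M.cl w) + M.P (Xᶜ ∩ M.cl w) := by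
    rw [← M.add, ← Set.union_inter_distrib_right, Set.union_compl_self, Set.univ_inter]
    rw [← Set.inter_inter_distrib_right, Set.inter_compl_self, Set.empty_inter]
  rw [Pw, Pw, ← add_div, ← hadd, div_self (M.P_cl_pos w).ne']

theorem lt_half_of_lt_Pw_of_lt_Pw_compl {w : W} {X : Set W} {c : ℝ}
    (hX : c < M.Pw w X) (hXc : c < M.Pw w Xᶜ) : c < 1 / 2 := by
  linarith [M.Pw_add_Pw_compl w X]

theorem lt_Pw_or_lt_Pw_compl {c : ℝ} (hc : c < 1 / 2) (w : W) (X : Set W) :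
    c < M.Pw w X ∨ c < M.Pw w Xᶜ := by
  by_contra! h
  linarith [M.Pw_add_Pw_compl w X]

end EPM

/-- The scheme `(Bφ ∧ B¬φ) → (Bψ ∨ B¬ψ)`: conflicting beliefs about `φ` force an opinion
about `ψ`. -/
def Form.conflictImpOpinion {A : Type} (φ ψ : Form A) : Form A :=
  .imp (.and (.B φ) (.B (.neg φ))) (.or (.B ψ) (.B (.neg ψ)))

section ProbabilitySemantics

variable {W A : Type} {c : ℝ} {M : EPM W A} {w : W} {φ ψ : Form A}

theorem mem_psem_imp : w ∈ psem c M (.imp φ ψ) ↔ (w ∈ psem c M φ → w ∈ psem c M ψ) := by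
  simp [Form.imp, psem]

theorem mem_psem_or : w ∈ psem c M (.or φ ψ) ↔ w ∈ psem c M φ ∨ w ∈ psem c M ψ := by
  simp [Form.or, psem, or_iff_not_imp_left]

theorem mem_psem_conflictImpOpinion (c : ℝ) (M : EPM W A) (w : W) (φ ψ : Form A) :
    w ∈ psem c M (.conflictImpOpinion φ ψ) := by
  rw [Form.conflictImpOpinion, mem_psem_imp, mem_psem_or]
  rintro ⟨hφ, hnφ⟩
  exact M.lt_Pw_or_lt_Pw_compl (M.lt_half_of_lt_Pw_of_lt_Pw_compl hφ hnφ) w (psem c M ψ)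

end ProbabilitySemantics

/-- An epistemic neighbourhood model: `N w` is the family of propositions believed at `w`. A
proposition is a set of arbitrary worlds rather than a subset of the `R`-class of `w`; the field
`mono` ensures that only its part inside that class matters. -/
structure NbhdModel (W : Type*) (A : Type*) where
  R : W → W → Prop
  equiv : Equivalence R
  V : W → Set A
  N : W → Set (Set W)
  empty_notMem : ∀ w, ∅ ∉ N w
  univ_mem : ∀ w, Set.univ ∈ N w
  congr : ∀ {w v}, R w v → N w = N v
  mono : ∀ {w X Y}, X ∈ N w → (∀ v ∈ X, R w v → v ∈ Y) → Y ∈ N w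

/-- The truth set of a formula in a neighbourhood model: `K` quantifies over the `R`-class, and
`Bφ` holds at `w` iff `⟦φ⟧ ∈ N w`. -/
def nsem {W : Type*} {A : Type} (M : NbhdModel W A) : Form A → Set W
  | .top => Set.univ
  | .atom p => {w | p ∈ M.V w}
  | .neg φ => (nsem M φ)ᶜ
  | .and φ ψ => nsem M φ ∩ nsem M ψ
  | .K φ => {w | ∀ v, M.R w v → v ∈ nsem M φ}
  | .B φ => {w | nsem M φ ∈ M.N w}

section NeighbourhoodSemantics

variable {W : Type*} {A : Type} {M : NbhdModel W A} {w : W} {φ ψ : Form A}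

theorem mem_nsem_imp : w ∈ nsem M (.imp φ ψ) ↔ (w ∈ nsem M φ → w ∈ nsem M ψ) := by
  simp [Form.imp, nsem]

theorem mem_nsem_or : w ∈ nsem M (.or φ ψ) ↔ w ∈ nsem M φ ∨ w ∈ nsem M ψ := by
  simp [Form.or, nsem, or_iff_not_imp_left]

theorem nsem_bot : nsem M .bot = ∅ :=
  Set.compl_univ

theorem evalb_decide_mem_nsem (M : NbhdModel W A) (w : W) (φ : Form A) :
    evalb (fun ψ => decide (w ∈ nsem M ψ)) φ = decide (w ∈ nsem M φ) := by
  induction φ with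
  | top => simp [evalb, nsem]
  | neg φ ih => simp [evalb, nsem, ih]
  | and φ ψ ihφ ihψ => simp [evalb, nsem, ihφ, ihψ]
  | atom | K | B => rfl

theorem Taut.mem_nsem (h : Taut φ) (M : NbhdModel W A) (w : W) : w ∈ nsem M φ :=
  of_decide_eq_true ((evalb_decide_mem_nsem M w φ).symm.trans (h _))

theorem KB.mem_nsem (h : KB φ) (M : NbhdModel W A) (w : W) : w ∈ nsem M φ := by
  induction h generalizing w with
  | taut h => exact h.mem_nsem M w
  | kdist φ ψ =>
    simp only [mem_nsem_imp]
    exact fun hφψ hφ v hv => mem_nsem_imp.1 (hφψ v hv) (hφ v hv)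
  | kt φ => exact mem_nsem_imp.2 fun hφ => hφ w (M.equiv.refl w)
  | k4 φ => exact mem_nsem_imp.2 fun hφ _ hv u hu => hφ u (M.equiv.trans hv hu)
  | k5 φ =>
    exact mem_nsem_imp.2 fun hφ _ hv hKφ =>
      hφ fun u hu => hKφ u (M.equiv.trans (M.equiv.symm hv) hu)
  | bf => exact fun h => M.empty_notMem w (nsem_bot (M := M) ▸ h)
  | bn => exact M.univ_mem w
  | ap φ => exact mem_nsem_imp.2 fun hφ _ hv => (M.congr hv).subset hφ
  | an φ => exact mem_nsem_imp.2 fun hφ _ hv hBφ => hφ ((M.congr hv).superset hBφ)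
  | kbm φ ψ =>
    simp only [mem_nsem_imp]
    exact fun hφψ hφ => M.mono hφ fun v hvφ hv => mem_nsem_imp.1 (hφψ v hv) hvφ
  | mp _ _ ihφψ ihφ => exact mem_nsem_imp.1 (ihφψ w) (ihφ w)
  | nec _ ih => exact fun v _ => ih v

end NeighbourhoodSemantics

/-- The neighbourhood model whose worlds are all valuations, none of them epistemically
distinguishable, and whose believed propositions are those entailed by `p` or by `¬p`. -/
def conflictModel {A : Type*} (p : A) : NbhdModel (Set A) A where
  R _ _ := True
  equiv := ⟨fun _ => trivial, fun _ => trivial, fun _ _ => trivial⟩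
  V := id
  N _ := {X | {s | p ∈ s} ⊆ X ∨ {s | p ∈ s}ᶜ ⊆ X}
  empty_notMem _ := by
    rintro (h | h)
    · exact @h {p} (Set.mem_singleton p)
    · exact @h ∅ (Set.notMem_empty p)
  univ_mem _ := .inl (Set.subset_univ _)
  congr _ := rfl
  mono hX hXY := hX.imp (fun h _ hs => hXY _ (h hs) trivial) (fun h _ hs => hXY _ (h hs) trivial)

section ConflictModel

variable {A : Type} {p q : A}

theorem mem_nsem_conflictModel_B_atom_self (p : A) (w : Set A) :
    w ∈ nsem (conflictModel p) (.B (.atom p)) :=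
  .inl subset_rfl

theorem mem_nsem_conflictModel_B_neg_atom_self (p : A) (w : Set A) :
    w ∈ nsem (conflictModel p) (.B (.neg (.atom p))) :=
  .inr subset_rfl

theorem notMem_nsem_conflictModel_B_atom (hpq : p ≠ q) (w : Set A) :
    w ∉ nsem (conflictModel p) (.B (.atom q)) := by
  rintro (h | h)
  · exact hpq.symm (@h {p} (Set.mem_singleton p))
  · exact @h ∅ (Set.notMem_empty p)

theorem notMem_nsem_conflictModel_B_neg_atom (hpq : p ≠ q) (w : Set A) :
    w ∉ nsem (conflictModel p) (.B (.neg (.atom q))) := by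
  rintro (h | h)
  · exact @h Set.univ (Set.mem_univ p) (Set.mem_univ q)
  · exact @h {q} hpq (Set.mem_singleton q)

theorem not_KB_conflictImpOpinion (hpq : p ≠ q) :
    ¬ KB (.conflictImpOpinion (.atom p) (.atom q)) := by
  intro h
  have himp := mem_nsem_imp.1 (h.mem_nsem (conflictModel p) ∅)
  have hor := himp ⟨mem_nsem_conflictModel_B_atom_self p ∅,
    mem_nsem_conflictModel_B_neg_atom_self p ∅⟩
  exact (mem_nsem_or.1 hor).elim (notMem_nsem_conflictModel_B_atom hpq ∅)
    (notMem_nsem_conflictModel_B_neg_atom hpq ∅)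

end ConflictModel

theorem KB_probability_incompleteness_general (A : Type) [Nontrivial A] :
    ∃ φ : Form A,
      (∀ (c : ℝ) (W : Type) (M : EPM W A) (w : W), w ∈ psem c M φ) ∧ ¬ KB φ := by
  obtain ⟨p, q, hpq⟩ := exists_pair_ne A
  exact ⟨.conflictImpOpinion (.atom p) (.atom q),
    fun c _ M w => mem_psem_conflictImpOpinion c M w _ _, not_KB_conflictImpOpinion hpq⟩

/-- `KB` is incomplete for all thresholds with respect to epistemic probability models:
some formula is valid under the probability semantics for every threshold
`c ∈ (0,1) ∩ ℚ` yet is not `KB`-derivable. -/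
theorem KB_probability_incompleteness :
    ∃ φ : Form ℕ,
      (∀ c : ℚ, 0 < c → c < 1 →
        ∀ (W : Type) (M : EPM W ℕ) (w : W), w ∈ psem (c : ℝ) M φ) ∧
      ¬ KB φ := by
  obtain ⟨φ, hvalid, hunprovable⟩ := KB_probability_incompleteness_general ℕ
  exact ⟨φ, fun c _ _ => hvalid c, hunprovable⟩
end

section
/- Let KBeq⁻ be the calculus obtained from KBeq by omitting the axiom schemes (BF) and (KBM). Then KBeq⁻ and KBeq derive the same theorems: for every formula φ of L_KB, KBeq⁻ ⊢ φ if and only if KBeq ⊢ φ. -/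
open Classical

/-- Conjunction of a list of formulas. -/
def bigAnd {A : Type} : List (Form A) → Form A
  | [] => Form.top
  | φ :: l => Form.and φ (bigAnd l)

/-- Disjunction of a list of formulas. -/
def bigOr {A : Type} : List (Form A) → Form A
  | [] => Form.bot
  | φ :: l => Form.or φ (bigOr l)

/-- The conjunction `d_1φ_1∧…∧d_nφ_n∧e_1ψ_1∧…∧e_nψ_n` where `d_i` is the empty
string iff `i ∈ D` and `e_i` is the empty string iff `i ∈ E` (otherwise `¬`). -/
def conjDE {A : Type} {n : ℕ} (φ ψ : Fin n → Form A) (D E : Finset (Fin n)) : Form A :=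
  bigAnd (List.ofFn (fun i => if i ∈ D then φ i else Form.neg (φ i)) ++
          List.ofFn (fun i => if i ∈ E then ψ i else Form.neg (ψ i)))

/-- The formula `F_k`: the disjunction of all the conjunctions in which exactly
`k` of the `d_i` are the empty string and at least `k` of the `e_i` are. -/
noncomputable def segF {A : Type} {n : ℕ} (φ ψ : Fin n → Form A) (k : ℕ) : Form A :=
  bigOr ((((Finset.univ : Finset (Finset (Fin n) × Finset (Fin n))).filter
      (fun DE => DE.1.card = k ∧ k ≤ DE.2.card)).toList).map
      (fun DE => conjDE φ ψ DE.1 DE.2))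

/-- Segerberg's notation `(φ_1,…,φ_n 𝕀 ψ_1,…,ψ_n) := K(F_0 ∨ ⋯ ∨ F_n)`. -/
noncomputable def segI {A : Type} {n : ℕ} (φ ψ : Fin n → Form A) : Form A :=
  Form.K (bigOr ((List.range (n + 1)).map (segF φ ψ)))

/-- The Hilbert calculus `KBeq`, extending `KB` with (D), (SC) and (Scott). -/
inductive KBeq {A : Type} : Form A → Prop where
  | taut {φ : Form A} : Taut φ → KBeq φ
  | kdist (φ ψ : Form A) :
      KBeq (Form.imp (Form.K (Form.imp φ ψ)) (Form.imp (Form.K φ) (Form.K ψ)))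
  | kt (φ : Form A) : KBeq (Form.imp (Form.K φ) φ)
  | k4 (φ : Form A) : KBeq (Form.imp (Form.K φ) (Form.K (Form.K φ)))
  | k5 (φ : Form A) : KBeq (Form.imp (Form.neg (Form.K φ)) (Form.K (Form.neg (Form.K φ))))
  | bf : KBeq (Form.neg (Form.B (Form.bot)))
  | bn : KBeq (Form.B Form.top)
  | ap (φ : Form A) : KBeq (Form.imp (Form.B φ) (Form.K (Form.B φ)))
  | an (φ : Form A) : KBeq (Form.imp (Form.neg (Form.B φ)) (Form.K (Form.neg (Form.B φ))))
  | kbm (φ ψ : Form A) :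
      KBeq (Form.imp (Form.K (Form.imp φ ψ)) (Form.imp (Form.B φ) (Form.B ψ)))
  | dax (φ : Form A) : KBeq (Form.imp (Form.B φ) (Form.neg (Form.B (Form.neg φ))))
  | scax (φ ψ : Form A) :
      KBeq (Form.imp
        (Form.and (Form.neg (Form.B (Form.neg φ)))
          (Form.neg (Form.K (Form.neg (Form.and (Form.neg φ) ψ)))))
        (Form.B (Form.or φ ψ)))
  | scott (m : ℕ) (φ ψ : Fin (m + 1) → Form A) :
      KBeq (Form.imp
        (Form.and (segI φ ψ)
          (Form.and (Form.B (φ 0))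
            (bigAnd (List.ofFn (fun i : Fin m => Form.neg (Form.B (Form.neg (φ i.succ))))))))
        (bigOr (List.ofFn (fun i : Fin (m + 1) => Form.B (ψ i)))))
  | mp {φ ψ : Form A} : KBeq (Form.imp φ ψ) → KBeq φ → KBeq ψ
  | nec {φ : Form A} : KBeq φ → KBeq (Form.K φ)

/-- The Hilbert calculus `KBeq⁻`: `KBeq` with the schemes (BF) and (KBM) omitted. -/
inductive KBeqm {A : Type} : Form A → Prop where
  | taut {φ : Form A} : Taut φ → KBeqm φ
  | kdist (φ ψ : Form A) :
      KBeqm (Form.imp (Form.K (Form.imp φ ψ)) (Form.imp (Form.K φ) (Form.K ψ)))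
  | kt (φ : Form A) : KBeqm (Form.imp (Form.K φ) φ)
  | k4 (φ : Form A) : KBeqm (Form.imp (Form.K φ) (Form.K (Form.K φ)))
  | k5 (φ : Form A) : KBeqm (Form.imp (Form.neg (Form.K φ)) (Form.K (Form.neg (Form.K φ))))
  | bn : KBeqm (Form.B Form.top)
  | ap (φ : Form A) : KBeqm (Form.imp (Form.B φ) (Form.K (Form.B φ)))
  | an (φ : Form A) : KBeqm (Form.imp (Form.neg (Form.B φ)) (Form.K (Form.neg (Form.B φ))))
  | dax (φ : Form A) : KBeqm (Form.imp (Form.B φ) (Form.neg (Form.B (Form.neg φ))))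
  | scax (φ ψ : Form A) :
      KBeqm (Form.imp
        (Form.and (Form.neg (Form.B (Form.neg φ)))
          (Form.neg (Form.K (Form.neg (Form.and (Form.neg φ) ψ)))))
        (Form.B (Form.or φ ψ)))
  | scott (m : ℕ) (φ ψ : Fin (m + 1) → Form A) :
      KBeqm (Form.imp
        (Form.and (segI φ ψ)
          (Form.and (Form.B (φ 0))
            (bigAnd (List.ofFn (fun i : Fin m => Form.neg (Form.B (Form.neg (φ i.succ))))))))
        (bigOr (List.ofFn (fun i : Fin (m + 1) => Form.B (ψ i)))))
  | mp {φ ψ : Form A} : KBeqm (Form.imp φ ψ) → KBeqm φ → KBeqm ψ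
  | nec {φ : Form A} : KBeqm φ → KBeqm (Form.K φ)

/-!
Read under a Boolean valuation, `F_0 ∨ ⋯ ∨ F_n` says that at most as many of the `φ_i` as of the
`ψ_i` are true. For `n = 1` this is `φ → ψ`, so `(φ 𝕀 ψ)` follows from `K(φ → ψ)`, and (Scott) with
`m = 1` turns it into `Bφ → Bψ`, which is (KBM). For (BF), apply (D) to `⊤` and use (N).
-/

variable {A : Type}

section Valuation

variable (v : Form A → Bool)

theorem evalb_imp (φ ψ : Form A) :
    evalb v (φ.imp ψ) = true ↔ (evalb v φ = true → evalb v ψ = true) := by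
  cases hφ : evalb v φ <;> simp [Form.imp, evalb, hφ]

theorem evalb_bigAnd (l : List (Form A)) :
    evalb v (bigAnd l) = true ↔ ∀ φ ∈ l, evalb v φ = true := by
  induction l with
  | nil => simp [bigAnd, evalb]
  | cons φ l ih => simp [bigAnd, evalb, ih]

theorem evalb_bigOr (l : List (Form A)) :
    evalb v (bigOr l) = true ↔ ∃ φ ∈ l, evalb v φ = true := by
  induction l with
  | nil => simp [bigOr, Form.bot, evalb]
  | cons φ l ih => cases hφ : evalb v φ <;> simp [bigOr, Form.or, evalb, hφ, ih]

/-- The indices of the members of the family `φ` that are true under `v`. For the two families of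
Segerberg's formula, these are the only `D` and `E` for which the conjunction `conjDE φ ψ D E` is
true under `v`. -/
def trueIndices {ι : Type*} [Fintype ι] (φ : ι → Form A) : Finset ι :=
  {i | evalb v (φ i) = true}

variable {v} in
theorem mem_trueIndices {ι : Type*} [Fintype ι] {φ : ι → Form A} {i : ι} :
    i ∈ trueIndices v φ ↔ evalb v (φ i) = true := by
  simp [trueIndices]

theorem evalb_ite_neg (p : Prop) [Decidable p] (φ : Form A) :
    evalb v (if p then φ else φ.neg) = true ↔ (evalb v φ = true ↔ p) := by
  by_cases hp : p <;> simp [hp, evalb]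

variable {n : ℕ} (φ ψ : Fin n → Form A)

theorem evalb_conjDE (D E : Finset (Fin n)) :
    evalb v (conjDE φ ψ D E) = true ↔ trueIndices v φ = D ∧ trueIndices v ψ = E := by
  simp only [conjDE, evalb_bigAnd, List.mem_append, or_imp, forall_and, List.forall_mem_ofFn_iff,
    evalb_ite_neg, Finset.ext_iff, mem_trueIndices]

theorem evalb_segF (k : ℕ) :
    evalb v (segF φ ψ k) = true ↔
      (trueIndices v φ).card = k ∧ k ≤ (trueIndices v ψ).card := by
  simp [segF, evalb_bigOr, evalb_conjDE]

theorem evalb_bigOr_segF :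
    evalb v (bigOr ((List.range (n + 1)).map (segF φ ψ))) = true ↔
      (trueIndices v φ).card ≤ (trueIndices v ψ).card := by
  have card_le : (trueIndices v φ).card ≤ n := card_finset_fin_le _
  simp [evalb_bigOr, evalb_segF, card_le]

end Valuation

namespace KBeqm

theorem of_entails {Γ : List (Form A)} {φ : Form A} (hΓ : ∀ γ ∈ Γ, KBeqm γ)
    (h : ∀ v, (∀ γ ∈ Γ, evalb v γ = true) → evalb v φ = true) : KBeqm φ := by
  induction Γ generalizing φ with
  | nil => exact .taut fun v => h v (by simp)
  | cons γ Γ ih =>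
    rw [List.forall_mem_cons] at hΓ
    refine .mp (ih hΓ.2 fun v hv => ?_) hΓ.1
    exact (evalb_imp v γ φ).2 fun hγ => h v (List.forall_mem_cons.2 ⟨hγ, hv⟩)

theorem imp_trans {φ ψ χ : Form A} (hφψ : KBeqm (φ.imp ψ)) (hψχ : KBeqm (ψ.imp χ)) :
    KBeqm (φ.imp χ) := by
  refine of_entails (Γ := [φ.imp ψ, ψ.imp χ]) (by simp [hφψ, hψχ]) fun v h => ?_
  simp only [List.forall_mem_cons, evalb_imp] at h ⊢
  exact h.2.1 ∘ h.1

theorem K_imp_K {φ ψ : Form A} (h : KBeqm (φ.imp ψ)) : KBeqm (φ.K.imp ψ.K) :=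
  .mp (.kdist φ ψ) (.nec h)

theorem K_imp_segI {n : ℕ} {χ : Form A} {φ ψ : Fin n → Form A}
    (h : ∀ v, evalb v χ = true → (trueIndices v φ).card ≤ (trueIndices v ψ).card) :
    KBeqm (χ.K.imp (segI φ ψ)) :=
  K_imp_K <| .taut fun v => (evalb_imp v _ _).2 fun hχ => (evalb_bigOr_segF v φ ψ).2 (h v hχ)

theorem K_imp_imp_segI (n : ℕ) (φ ψ : Form A) :
    KBeqm ((φ.imp ψ).K.imp (segI (fun _ : Fin n => φ) fun _ => ψ)) := by
  refine K_imp_segI fun v hv => Finset.card_le_card fun i hi => ?_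
  rw [mem_trueIndices] at hi ⊢
  exact (evalb_imp v φ ψ).1 hv hi

theorem segI_imp_B_imp_B (φ ψ : Form A) :
    KBeqm ((segI (fun _ : Fin 1 => φ) fun _ => ψ).imp (φ.B.imp ψ.B)) := by
  refine of_entails (List.forall_mem_singleton.2 (.scott 0 (fun _ => φ) fun _ => ψ)) fun v => ?_
  simp [evalb_imp, evalb_bigOr, bigAnd, evalb]

theorem K_imp_imp_B_imp_B (φ ψ : Form A) : KBeqm ((φ.imp ψ).K.imp (φ.B.imp ψ.B)) :=
  imp_trans (K_imp_imp_segI 1 φ ψ) (segI_imp_B_imp_B φ ψ)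

theorem neg_B_bot : KBeqm (Form.bot : Form A).B.neg :=
  .mp (.dax .top) .bn

theorem toKBeq {φ : Form A} (h : KBeqm φ) : KBeq φ := by
  induction h with
  | taut h => exact .taut h
  | kdist φ ψ => exact .kdist φ ψ
  | kt φ => exact .kt φ
  | k4 φ => exact .k4 φ
  | k5 φ => exact .k5 φ
  | bn => exact .bn
  | ap φ => exact .ap φ
  | an φ => exact .an φ
  | dax φ => exact .dax φ
  | scax φ ψ => exact .scax φ ψ
  | scott m φ ψ => exact .scott m φ ψ
  | mp _ _ himp hφ => exact .mp himp hφ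
  | nec _ hφ => exact .nec hφ

end KBeqm

theorem KBeq.toKBeqm {φ : Form A} (h : KBeq φ) : KBeqm φ := by
  induction h with
  | taut h => exact .taut h
  | kdist φ ψ => exact .kdist φ ψ
  | kt φ => exact .kt φ
  | k4 φ => exact .k4 φ
  | k5 φ => exact .k5 φ
  | bf => exact .neg_B_bot
  | bn => exact .bn
  | ap φ => exact .ap φ
  | an φ => exact .an φ
  | kbm φ ψ => exact .K_imp_imp_B_imp_B φ ψ
  | dax φ => exact .dax φ
  | scax φ ψ => exact .scax φ ψ
  | scott m φ ψ => exact .scott m φ ψ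
  | mp _ _ himp hφ => exact .mp himp hφ
  | nec _ hφ => exact .nec hφ

/-- `KBeq⁻` (i.e. `KBeq` without (BF) and (KBM)) derives exactly the theorems of
`KBeq`. -/
theorem KBeqm_eq_KBeq {A : Type} (φ : Form A) : KBeqm φ ↔ KBeq φ :=
  ⟨KBeqm.toKBeq, KBeq.toKBeqm⟩
end
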